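/- Let (X,d) be a metric space, α : [0,∞) → [1,∞) nonincreasing, and β : [0,∞) → [0,1) with α(t)·β(t) < 1 for all t > 0. Let F map X into nonempty closed subsets of X and let (x_n) be a sequence with x_{n+1} ∈ F(x_n) satisfying, with d_n = d(x_n, x_{n+1}): d_n ≤ α(d_n)·d_F(x_n) and d_F(x_{n+1}) ≤ β(d_n)·d_n for all n. Then the sequence (d_n) is nonincreasing: d_{n+1} ≤ d_n for all n. -/

import Mathlib

/-!
Write `dₙ = d(xₙ, x_{n+1})` and `δₙ = d_F(xₙ)`; both are nonnegative.
If `dₙ < d_{n+1}`, then `α(d_{n+1}) ≤ α(dₙ)` by monotonicity of `α`, so that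
`d_{n+1} ≤ α(d_{n+1}) δ_{n+1} ≤ α(dₙ) δ_{n+1}`. When `0 ≤ α(dₙ)` this is at most
`α(dₙ) β(dₙ) dₙ ≤ dₙ`, and otherwise it is at most `0 ≤ dₙ`: a contradiction in both cases.
-/

theorem le_of_le_mul_of_antitoneOn {R : Type*} [MulZeroClass R] [LinearOrder R] [PosMulMono R]
    [MulPosMono R] {α : R → R} {s : Set R} {a b δ r : R} (hα : AntitoneOn α s)
    (has : a ∈ s) (hbs : b ∈ s) (ha : 0 ≤ a) (hδ : 0 ≤ δ)
    (hb : b ≤ α b * δ) (hδr : δ ≤ r) (hr : α a * r ≤ a) : b ≤ a := by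
  by_contra! hab
  have hbδ : b ≤ α a * δ :=
    hb.trans (mul_le_mul_of_nonneg_right (hα has hbs hab.le) hδ)
  have hδa : α a * δ ≤ a := by
    rcases le_total 0 (α a) with hpos | hneg
    · exact (mul_le_mul_of_nonneg_left hδr hpos).trans hr
    · exact (mul_nonpos_of_nonpos_of_nonneg hneg hδ).trans ha
  exact (hbδ.trans hδa).not_gt hab

theorem step_distances_nonincreasing_general {R : Type*} [MonoidWithZero R] [LinearOrder R]
    [PosMulMono R] [MulPosMono R] {α β : R → R} {d δ : ℕ → R}
    (hα : AntitoneOn α (Set.Ici 0)) (hαβ : ∀ t, 0 < t → α t * β t ≤ 1)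
    (hd : ∀ n, 0 ≤ d n) (hδ : ∀ n, 0 ≤ δ n)
    (hdδ : ∀ n, d n ≤ α (d n) * δ n) (hδd : ∀ n, δ (n + 1) ≤ β (d n) * d n) :
    Antitone d := by
  refine antitone_nat_of_succ_le fun n ↦ ?_
  have hαβd : α (d n) * (β (d n) * d n) ≤ d n := by
    rcases (hd n).eq_or_lt with hzero | hpos
    · simp [← hzero]
    · rw [← mul_assoc]
      exact mul_le_of_le_one_left (hd n) (hαβ _ hpos)
  exact le_of_le_mul_of_antitoneOn hα (hd n) (hd (n + 1)) (hd n) (hδ (n + 1))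
    (hdδ (n + 1)) (hδd n) hαβd

/-- The monotonicity step in the proof of **Theorem 1.5**: if `α` is nonincreasing,
`α t * β t < 1` for `t > 0`, and `(xₙ)` satisfies `x_{n+1} ∈ F(xₙ)` together with
conditions `(Aₙ)` and `(Bₙ)`, then the sequence `dₙ = d(xₙ, x_{n+1})` is
nonincreasing. -/
theorem step_distances_nonincreasing
    {X : Type*} [MetricSpace X]
    (α β : ℝ → ℝ)
    (hα : ∀ t, 0 ≤ t → 1 ≤ α t)
    (hβ : ∀ t, 0 ≤ t → β t ∈ Set.Ico (0 : ℝ) 1)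
    -- α is nonincreasing on [0,∞)
    (hαmono : AntitoneOn α (Set.Ici 0))
    (hcontr : ∀ t > (0 : ℝ), α t * β t < 1)
    (F : X → Set X)
    (hFne : ∀ x, (F x).Nonempty) (hFcl : ∀ x, IsClosed (F x))
    (x : ℕ → X)
    (horbit : ∀ n : ℕ, x (n + 1) ∈ F (x n))
    (hA : ∀ n : ℕ, dist (x n) (x (n + 1)) ≤
      α (dist (x n) (x (n + 1))) * Metric.infDist (x n) (F (x n)))
    (hB : ∀ n : ℕ, Metric.infDist (x (n + 1)) (F (x (n + 1))) ≤
      β (dist (x n) (x (n + 1))) * dist (x n) (x (n + 1))) :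
    ∀ n : ℕ, dist (x (n + 1)) (x (n + 2)) ≤ dist (x n) (x (n + 1)) :=
  fun n ↦ step_distances_nonincreasing_general hαmono (fun t ht ↦ (hcontr t ht).le)
    (fun _ ↦ dist_nonneg) (fun _ ↦ Metric.infDist_nonneg) hA hB n.le_succ
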